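/- arXiv:2402.02412 — 6 statements merged into one kernel-verified Lean document; each statement's English description precedes it below -/
import Mathlib

section
/- Let G = (V, E) be a finite simple graph with V = {v_1, …, v_n}. For each i ∈ {1, …, n} let s_i = [0,1] × [2i−2, 2i−1], and for each edge {v_i, v_j} ∈ E with i < j let r_{i,j} = s_i ∪ ([0, n+1] × [2i−1, 2j−2]) ∪ s_j (a 3-shape). Then for every γ ∈ ℕ: G has a vertex cover of size at most γ if and only if the family {r_{i,j} : {v_i, v_j} ∈ E, i < j} admits a feasible stabbing set of cost at most γ. -/
structure Rect where
  xl : ℝ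
  xr : ℝ
  yb : ℝ
  yt : ℝ

namespace Rect
def width (R : Rect) : ℝ := R.xr - R.xl
def valid (R : Rect) : Prop := R.xl ≤ R.xr ∧ R.yb ≤ R.yt
def toSet (R : Rect) : Set (ℝ × ℝ) := Set.Icc R.xl R.xr ×ˢ Set.Icc R.yb R.yt
end Rect

structure Seg where
  x1 : ℝ
  x2 : ℝ
  y : ℝ

namespace Seg
def len (s : Seg) : ℝ := s.x2 - s.x1
def valid (s : Seg) : Prop := s.x1 ≤ s.x2
def stabsRect (s : Seg) (R : Rect) : Prop :=
  s.x1 ≤ R.xl ∧ R.xr ≤ s.x2 ∧ R.yb ≤ s.y ∧ s.y ≤ R.yt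
def stabsShape {k : ℕ} (s : Seg) (R : Fin k → Rect) : Prop :=
  ∃ i, s.stabsRect (R i)
end Seg

/-- `R 0, …, R (k-1)` (from bottom to top) form a `k`-shape: all rectangles are valid
(nonempty), and for consecutive rectangles the top edge of the lower one is contained in the
bottom edge of the upper one, or vice versa (they share their `y`-coordinate and one
`x`-interval contains the other). -/
def IsKShape {k : ℕ} (R : Fin k → Rect) : Prop :=
  (∀ i, (R i).valid) ∧
  ∀ (i : ℕ) (h : i + 1 < k),
    (R ⟨i, Nat.lt_of_succ_lt h⟩).yt = (R ⟨i + 1, h⟩).yb ∧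
    (Set.Icc (R ⟨i, Nat.lt_of_succ_lt h⟩).xl (R ⟨i, Nat.lt_of_succ_lt h⟩).xr ⊆
        Set.Icc (R ⟨i + 1, h⟩).xl (R ⟨i + 1, h⟩).xr ∨
      Set.Icc (R ⟨i + 1, h⟩).xl (R ⟨i + 1, h⟩).xr ⊆
        Set.Icc (R ⟨i, Nat.lt_of_succ_lt h⟩).xl (R ⟨i, Nat.lt_of_succ_lt h⟩).xr)

/-- Total cost (length) of a finite set of horizontal segments. -/
noncomputable def segCost (S : Finset Seg) : ℝ := ∑ s ∈ S, s.len

/-- The unit square `s_i = [0,1] × [2i−2, 2i−1]` (for the 1-based index `i`). -/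
noncomputable def sqRect (i : ℕ) : Rect := ⟨0, 1, 2 * (i : ℝ) - 2, 2 * (i : ℝ) - 1⟩

/-- The wide rectangle `[0, n+1] × [2i−1, 2j−2]` (for 1-based indices `i < j`). -/
noncomputable def wideRect (n i j : ℕ) : Rect := ⟨0, (n : ℝ) + 1, 2 * (i : ℝ) - 1, 2 * (j : ℝ) - 2⟩

/-- The 3-shape `r_{i,j} = s_i ∪ ([0,n+1] × [2i−1, 2j−2]) ∪ s_j` for an edge `{v_i, v_j}`
(1-based indices `i < j`). -/
noncomputable def edgeShape (n i j : ℕ) : Fin 3 → Rect := ![sqRect i, wideRect n i j, sqRect j]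

/-- For a finite simple graph `G` on vertices `v_1, …, v_n` and every `γ : ℕ`,
`G` has a vertex cover of size at most `γ` iff the family of 3-shapes
`{r_{i,j} : {v_i, v_j} ∈ E, i < j}` admits a feasible stabbing set of cost at most `γ`. -/
theorem vertexCover_iff_stabbing (n : ℕ) (G : SimpleGraph (Fin n)) (γ : ℕ) :
    (∃ C : Finset (Fin n), C.card ≤ γ ∧
        ∀ i j : Fin n, G.Adj i j → i ∈ C ∨ j ∈ C) ↔
    (∃ S : Finset Seg, (∀ s ∈ S, s.valid) ∧
        (∀ i j : Fin n, G.Adj i j → i < j →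
          ∃ s ∈ S, s.stabsShape (edgeShape n ((i : ℕ) + 1) ((j : ℕ) + 1))) ∧
        segCost S ≤ γ) := by
  classical
  constructor
  · rintro ⟨C, hC, hcov⟩
    refine ⟨C.image (fun i : Fin n => (⟨0, 1, 2 * ((i : ℕ) : ℝ)⟩ : Seg)), ?_, ?_, ?_⟩
    · intro s hs
      obtain ⟨i, -, rfl⟩ := Finset.mem_image.1 hs
      simp [Seg.valid]
    · intro i j hij _
      rcases hcov i j hij with h | h
      · refine ⟨_, Finset.mem_image_of_mem _ h, 0, ?_⟩
        simp only [edgeShape, sqRect, Seg.stabsRect, Matrix.cons_val]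
        push_cast
        refine ⟨le_rfl, le_rfl, ?_, ?_⟩ <;> linarith
      · refine ⟨_, Finset.mem_image_of_mem _ h, 2, ?_⟩
        simp only [edgeShape, sqRect, Seg.stabsRect, Matrix.cons_val]
        push_cast
        refine ⟨le_rfl, le_rfl, ?_, ?_⟩ <;> linarith
    · have h1 : segCost (C.image (fun i : Fin n => (⟨0, 1, 2 * ((i : ℕ) : ℝ)⟩ : Seg)))
          = ((C.image (fun i : Fin n => (⟨0, 1, 2 * ((i : ℕ) : ℝ)⟩ : Seg))).card : ℝ) := by
        unfold segCost
        rw [Finset.sum_congr rfl (g := fun _ => (1 : ℝ))]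
        · simp
        · intro s hs
          obtain ⟨i, -, rfl⟩ := Finset.mem_image.1 hs
          simp [Seg.len]
      rw [h1]
      exact_mod_cast Finset.card_image_le.trans hC
  · rintro ⟨S, hval, hst, hcost⟩
    by_cases hn : n ≤ γ
    · exact ⟨Finset.univ, by simpa using hn, by simp⟩
    have hn' : (γ : ℝ) < n := by exact_mod_cast not_le.1 hn
    have hnn : ∀ s ∈ S, 0 ≤ s.len := fun s hs => sub_nonneg.2 (hval s hs)
    let C : Finset (Fin n) :=
      Finset.univ.filter (fun i : Fin n => ∃ s ∈ S, s.stabsRect (sqRect ((i : ℕ) + 1)))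
    have hC : ∀ i ∈ C, ∃ s ∈ S, s.stabsRect (sqRect ((i : ℕ) + 1)) := by
      intro i hi
      exact (Finset.mem_filter.1 hi).2
    have key : ∀ i j : Fin n, G.Adj i j → i < j → i ∈ C ∨ j ∈ C := by
      intro i j hij hlt
      obtain ⟨s, hs, k, hk⟩ := hst i j hij hlt
      fin_cases k
      · exact Or.inl (Finset.mem_filter.2 ⟨Finset.mem_univ _, s, hs, hk⟩)
      · exfalso
        have hk' : s.stabsRect (wideRect n ((i : ℕ) + 1) ((j : ℕ) + 1)) := hk
        obtain ⟨h1, h2, -, -⟩ := hk'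
        simp only [wideRect] at h1 h2
        have h3 : s.len ≤ segCost S := Finset.single_le_sum hnn hs
        simp only [Seg.len] at h3
        linarith
      · exact Or.inr (Finset.mem_filter.2 ⟨Finset.mem_univ _, s, hs, hk⟩)
    refine ⟨C, ?_, ?_⟩
    · haveI : Nonempty Seg := ⟨⟨0, 0, 0⟩⟩
      choose! f hfS hf using hC
      have hinj : Set.InjOn f (C : Set (Fin n)) := by
        intro i hi j hj hij
        have hi' := hf i hi
        have hj' := hf j hj
        rw [← hij] at hj'
        obtain ⟨-, -, h1, h2⟩ := hi'
        obtain ⟨-, -, h3, h4⟩ := hj'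
        simp only [sqRect] at h1 h2 h3 h4
        push_cast at h1 h2 h3 h4
        have a : (2 * (i : ℕ) : ℝ) ≤ 2 * (j : ℕ) + 1 := by linarith
        have b : (2 * (j : ℕ) : ℝ) ≤ 2 * (i : ℕ) + 1 := by linarith
        norm_cast at a b
        apply Fin.ext
        omega
      have h1 : (C.card : ℝ) ≤ segCost S := by
        calc (C.card : ℝ) = ∑ i ∈ C, (1 : ℝ) := by simp
          _ ≤ ∑ i ∈ C, (f i).len := by
            apply Finset.sum_le_sum
            intro i hi
            obtain ⟨h1, h2, -, -⟩ := hf i hi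
            simp only [sqRect] at h1 h2
            simp only [Seg.len]
            linarith
          _ = ∑ s ∈ C.image f, s.len := (Finset.sum_image hinj).symm
          _ ≤ segCost S := by
            apply Finset.sum_le_sum_of_subset_of_nonneg
            · intro s hs
              obtain ⟨i, hi, rfl⟩ := Finset.mem_image.1 hs
              exact hfS i hi
            · intro s hs _
              exact hnn s hs
      exact_mod_cast h1.trans hcost
    · intro i j hij
      rcases lt_or_gt_of_ne hij.ne with h | h
      · exact key i j hij h
      · exact (key j i hij.symm h).symm
end

section
/- Let P = {p_1, …, p_n} be a finite set and ℱ a family of nonempty subsets of P. For each i ∈ {1, …, n} let s_i = [0,1] × [2i−2, 2i−1]. For each set S = {p_{i_1}, …, p_{i_f}} ∈ ℱ with i_1 < i_2 < ⋯ < i_f, let K_S be the k-shape consisting of the stack of rectangles s_{i_1}, [0, n+1] × [2i_1 − 1, 2i_2 − 2], s_{i_2}, [0, n+1] × [2i_2 − 1, 2i_3 − 2], …, [0, n+1] × [2i_{f−1} − 1, 2i_f − 2], s_{i_f}. Then for every γ ∈ ℕ: there exists a hitting set H ⊆ P with |H| ≤ γ (i.e., H ∩ S ≠ ∅ for every S ∈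 ℱ) if and only if the family {K_S : S ∈ ℱ} admits a feasible stabbing set of cost at most γ. -/
/-- A horizontal segment stabs the k-shape `K_S` (the stack of the squares `s_i` for `i ∈ S`
interleaved with the wide rectangles `[0,n+1] × [2i−1, 2j−2]` for consecutive elements
`i < j` of `S`) iff it stabs one of these rectangles. (Indices of `Fin n` are 0-based, so
the corresponding 1-based index of `i : Fin n` is `i + 1`.) -/
def stabsKS (n : ℕ) (S : Finset (Fin n)) (s : Seg) : Prop :=
  (∃ i ∈ S, s.stabsRect (sqRect ((i : ℕ) + 1))) ∨
  (∃ i ∈ S, ∃ j ∈ S, i < j ∧ (∀ m ∈ S, ¬(i < m ∧ m < j)) ∧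
      s.stabsRect (wideRect n ((i : ℕ) + 1) ((j : ℕ) + 1)))

/-- For a finite set `P` of `n` elements, a family `ℱ` of nonempty subsets
of `P`, and every `γ : ℕ`: there is a hitting set `H ⊆ P` with `|H| ≤ γ` iff the family
`{K_S : S ∈ ℱ}` admits a feasible stabbing set of cost at most `γ`. -/
theorem hittingSet_iff_stabbing (n : ℕ) (F : Finset (Finset (Fin n)))
    (hF : ∀ S ∈ F, S.Nonempty) (γ : ℕ) :
    (∃ H : Finset (Fin n), H.card ≤ γ ∧ ∀ S ∈ F, ∃ p ∈ S, p ∈ H) ↔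
    (∃ Sg : Finset Seg, (∀ s ∈ Sg, s.valid) ∧
        (∀ S ∈ F, ∃ s ∈ Sg, stabsKS n S s) ∧ segCost Sg ≤ γ) := by
  classical
  constructor
  · rintro ⟨H, hc, hH⟩
    refine ⟨H.image (fun i : Fin n => (⟨0, 1, 2 * (((i : ℕ) + 1 : ℕ) : ℝ) - 2⟩ : Seg)), ?_, ?_, ?_⟩
    · intro s hs
      obtain ⟨i, _, rfl⟩ := Finset.mem_image.1 hs
      simp [Seg.valid]
    · intro S hS
      obtain ⟨p, hp, hpH⟩ := hH S hS
      refine ⟨_, Finset.mem_image_of_mem _ hpH, Or.inl ⟨p, hp, ?_⟩⟩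
      simp only [Seg.stabsRect, sqRect]
      refine ⟨le_rfl, le_rfl, le_rfl, by linarith⟩
    · unfold segCost
      have h1 : ∀ s ∈ H.image (fun i : Fin n => (⟨0, 1, 2 * (((i : ℕ) + 1 : ℕ) : ℝ) - 2⟩ : Seg)),
          s.len = 1 := by
        intro s hs
        obtain ⟨i, _, rfl⟩ := Finset.mem_image.1 hs
        simp [Seg.len]
      rw [Finset.sum_congr rfl h1, Finset.sum_const, nsmul_eq_mul, mul_one]
      exact_mod_cast Finset.card_image_le.trans hc
  · rintro ⟨Sg, hv, hst, hcost⟩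
    have hnn : ∀ s ∈ Sg, 0 ≤ s.len := fun s hs => sub_nonneg.2 (hv s hs)
    by_cases hw : ∃ s ∈ Sg, (n : ℝ) + 1 ≤ s.len
    · obtain ⟨s, hs, hl⟩ := hw
      have h1 : s.len ≤ segCost Sg := Finset.single_le_sum hnn hs
      refine ⟨Finset.univ, ?_, ?_⟩
      · rw [Finset.card_univ, Fintype.card_fin]
        have : (n : ℝ) ≤ γ := by linarith
        exact_mod_cast this
      · intro S hS
        obtain ⟨p, hp⟩ := hF S hS
        exact ⟨p, hp, Finset.mem_univ _⟩
    · push Not at hw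
      let H : Finset (Fin n) :=
        Finset.univ.filter (fun i => ∃ s ∈ Sg, s.stabsRect (sqRect ((i : ℕ) + 1)))
      have hH : ∀ i : Fin n, ∃ s : Seg, i ∈ H → s ∈ Sg ∧ s.stabsRect (sqRect ((i : ℕ) + 1)) := by
        intro i
        by_cases hi : i ∈ H
        · obtain ⟨s, hs⟩ := (Finset.mem_filter.1 hi).2
          exact ⟨s, fun _ => hs⟩
        · exact ⟨⟨0, 0, 0⟩, fun h => absurd h hi⟩
      choose f hf using hH
      have hinj : Set.InjOn f H := by
        intro i hi j hj hij
        obtain ⟨_, -, -, a1, a2⟩ := hf i hi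
        obtain ⟨_, -, -, b1, b2⟩ := hf j hj
        rw [← hij] at b1 b2
        simp only [sqRect] at a1 a2 b1 b2
        push_cast at a1 a2 b1 b2
        have c1 : (i : ℝ) < (j : ℕ) + 1 := by linarith
        have c2 : (j : ℝ) < (i : ℕ) + 1 := by linarith
        have d1 : (i : ℕ) < j + 1 := by exact_mod_cast c1
        have d2 : (j : ℕ) < i + 1 := by exact_mod_cast c2
        apply Fin.ext
        omega
      refine ⟨H, ?_, ?_⟩
      · have h1 : (H.card : ℝ) ≤ ∑ i ∈ H, (f i).len := by
          rw [← nsmul_one, ← Finset.sum_const]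
          apply Finset.sum_le_sum
          intro i hi
          obtain ⟨_, a, b, -, -⟩ := hf i hi
          simp only [sqRect] at a b
          unfold Seg.len
          linarith
        have h2 : ∑ i ∈ H, (f i).len ≤ segCost Sg := by
          rw [← Finset.sum_image (f := Seg.len) hinj]
          apply Finset.sum_le_sum_of_subset_of_nonneg
          · intro s hs
            obtain ⟨i, hi, rfl⟩ := Finset.mem_image.1 hs
            exact (hf i hi).1
          · intro s hs _
            exact hnn s hs
        have h3 : (H.card : ℝ) ≤ γ := h1.trans (h2.trans hcost)
        exact_mod_cast h3
      · intro S hS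
        obtain ⟨s, hs, hsS⟩ := hst S hS
        rcases hsS with ⟨i, hi, h⟩ | ⟨i, _, j, _, _, _, h⟩
        · exact ⟨i, hi, Finset.mem_filter.2 ⟨Finset.mem_univ _, s, hs, h⟩⟩
        · exfalso
          obtain ⟨a, b, -, -⟩ := h
          simp only [wideRect] at a b
          have := hw s hs
          unfold Seg.len at this
          linarith
end

section
/- Let K = R_1 ∪ ⋯ ∪ R_k be a k-shape and let B be the smallest axis-aligned rectangle containing K. If a horizontal segment s = [x_1, x_2] × {y} stabs K, then the extended segment [x_1 − k·w_max(K), x_2 + k·w_max(K)] × {y} stabs B. In particular, if 0 < δ ≤ 1 and every rectangle of K satisfies w(R_i) ≥ δ·w_max(K), then the extended segment has length at most (1 + 2k/δ)·|s|. -/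
theorem kshape_step {k : ℕ} (R : Fin k → Rect) (hR : IsKShape R) (w : ℝ)
    (hw : ∀ i, (R i).width ≤ w) (i : ℕ) (h : i + 1 < k) :
    |(R ⟨i + 1, h⟩).xl - (R ⟨i, Nat.lt_of_succ_lt h⟩).xl| ≤ w ∧
    |(R ⟨i + 1, h⟩).xr - (R ⟨i, Nat.lt_of_succ_lt h⟩).xr| ≤ w := by
  have v1 := (hR.1 ⟨i, Nat.lt_of_succ_lt h⟩).1
  have v2 := (hR.1 ⟨i + 1, h⟩).1
  have w1 := hw ⟨i, Nat.lt_of_succ_lt h⟩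
  have w2 := hw ⟨i + 1, h⟩
  unfold Rect.width at w1 w2
  rcases (hR.2 i h).2 with hc | hc
  · rw [Set.Icc_subset_Icc_iff v1] at hc
    obtain ⟨a, b⟩ := hc
    constructor <;> rw [abs_le] <;> constructor <;> linarith
  · rw [Set.Icc_subset_Icc_iff v2] at hc
    obtain ⟨a, b⟩ := hc
    constructor <;> rw [abs_le] <;> constructor <;> linarith

theorem kshape_dist {k : ℕ} (R : Fin k → Rect) (hR : IsKShape R) (w : ℝ)
    (hw : ∀ i, (R i).width ≤ w) (i : ℕ) (d : ℕ) (h : i + d < k) :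
    |(R ⟨i + d, h⟩).xl - (R ⟨i, by omega⟩).xl| ≤ d * w ∧
    |(R ⟨i + d, h⟩).xr - (R ⟨i, by omega⟩).xr| ≤ d * w := by
  induction d with
  | zero => simp
  | succ d ih =>
    obtain ⟨a, b⟩ := ih (by omega)
    obtain ⟨a', b'⟩ := kshape_step R hR w hw (i + d) h
    rw [abs_le] at a b a' b'
    simp only [← add_assoc]
    push_cast
    rw [abs_le, abs_le]
    refine ⟨⟨?_, ?_⟩, ?_, ?_⟩ <;> linarith [a.1, a.2, b.1, b.2, a'.1, a'.2, b'.1, b'.2]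

theorem kshape_far {k : ℕ} (R : Fin k → Rect) (hR : IsKShape R) (w : ℝ) (h0 : 0 ≤ w)
    (hw : ∀ i, (R i).width ≤ w) (i j : Fin k) :
    |(R j).xl - (R i).xl| ≤ k * w ∧ |(R j).xr - (R i).xr| ≤ k * w := by
  wlog hij : i ≤ j generalizing i j
  · have := this j i (le_of_not_ge hij)
    rwa [abs_sub_comm, abs_sub_comm (R i).xr] at this
  obtain ⟨i, hi⟩ := i
  obtain ⟨j, hj⟩ := j
  obtain ⟨d, rfl⟩ := Nat.exists_eq_add_of_le (show i ≤ j from hij)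
  obtain ⟨a, b⟩ := kshape_dist R hR w hw i d hj
  have hd : (d : ℝ) * w ≤ k * w :=
    mul_le_mul_of_nonneg_right (by exact_mod_cast (by omega : d ≤ k)) h0
  exact ⟨a.trans hd, b.trans hd⟩

/-- Let `K = R_1 ∪ ⋯ ∪ R_k` be a k-shape, `wmax = w_max(K)` and `B` the
smallest axis-aligned rectangle containing `K`. If a horizontal segment `s = [x_1,x_2] × {y}`
stabs `K`, then `[x_1 − k·wmax, x_2 + k·wmax] × {y}` stabs `B`; moreover, if `0 < δ ≤ 1` and
`w(R_i) ≥ δ·wmax` for every `i`, then the extended segment has length at most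
`(1 + 2k/δ)·|s|`. -/
theorem extended_segment_stabs_boundingBox {k : ℕ} (hk : 0 < k)
    (R : Fin k → Rect) (hR : IsKShape R)
    (wmax : ℝ)
    (hwmax : wmax = Finset.univ.sup' ⟨⟨0, hk⟩, Finset.mem_univ _⟩ (fun i => (R i).width))
    (B : Rect)
    (hB : B = ⟨Finset.univ.inf' ⟨⟨0, hk⟩, Finset.mem_univ _⟩ (fun i => (R i).xl),
               Finset.univ.sup' ⟨⟨0, hk⟩, Finset.mem_univ _⟩ (fun i => (R i).xr),
               Finset.univ.inf' ⟨⟨0, hk⟩, Finset.mem_univ _⟩ (fun i => (R i).yb),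
               Finset.univ.sup' ⟨⟨0, hk⟩, Finset.mem_univ _⟩ (fun i => (R i).yt)⟩)
    (s : Seg) (hs : s.valid) (hstab : s.stabsShape R) :
    (Seg.mk (s.x1 - k * wmax) (s.x2 + k * wmax) s.y).stabsRect B ∧
    (∀ δ : ℝ, 0 < δ → δ ≤ 1 → (∀ i, δ * wmax ≤ (R i).width) →
      (s.x2 + k * wmax) - (s.x1 - k * wmax) ≤ (1 + 2 * k / δ) * (s.x2 - s.x1)) := by
  have hw : ∀ i, (R i).width ≤ wmax := by
    intro i
    rw [hwmax]
    exact Finset.le_sup' (fun i => (R i).width) (Finset.mem_univ i)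
  obtain ⟨i, h1, h2, h3, h4⟩ := hstab
  have h0 : 0 ≤ wmax := by
    refine le_trans ?_ (hw i)
    have := (hR.1 i).1
    unfold Rect.width
    linarith
  have far := fun j => kshape_far R hR wmax h0 hw i j
  constructor
  · subst hB
    refine ⟨?_, ?_, ?_, ?_⟩
    · refine Finset.le_inf' ⟨⟨0, hk⟩, Finset.mem_univ _⟩ (fun i => (R i).xl) fun j _ => ?_
      have := (abs_le.1 (far j).1).1
      dsimp only
      linarith
    · refine Finset.sup'_le ⟨⟨0, hk⟩, Finset.mem_univ _⟩ (fun i => (R i).xr) fun j _ => ?_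
      have := (abs_le.1 (far j).2).2
      dsimp only
      linarith
    · exact (Finset.inf'_le (fun i => (R i).yb) (Finset.mem_univ i)).trans h3
    · exact h4.trans (Finset.le_sup' (fun i => (R i).yt) (Finset.mem_univ i))
  · intro δ hδ _ hall
    have hi := hall i
    unfold Rect.width at hi
    have hle : wmax ≤ (s.x2 - s.x1) / δ := by
      rw [le_div_iff₀ hδ]
      linarith
    have hm : 2 * (k : ℝ) * wmax ≤ 2 * k * ((s.x2 - s.x1) / δ) :=
      mul_le_mul_of_nonneg_left hle (by positivity)
    have he : (1 + 2 * k / δ) * (s.x2 - s.x1)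
        = (s.x2 - s.x1) + 2 * k * ((s.x2 - s.x1) / δ) := by ring
    rw [he]
    linarith
end

section
/- Let 𝒦 be a finite family of k-shapes, let X be the (finite) set of all x-coordinates x_i^ℓ, x_i^r of the rectangles of the shapes in 𝒦, and let Y be the (finite) set of all y-coordinates y_i^b, y_i^t of these rectangles. Then for every feasible stabbing set S for 𝒦 there exists a feasible stabbing set S′ for 𝒦 whose cost is at most the cost of S and such that every segment [x_1, x_2] × {y} ∈ S′ satisfies x_1 ∈ X, x_2 ∈ X and y ∈ Y. -/
/-- Let `𝒦` be a finite family of k-shapes (indexed by a finset `A`), let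
`X` be the set of all `x`-coordinates and `Y` the set of all `y`-coordinates of the
rectangles of the shapes in `𝒦`. Then every feasible stabbing set `S` for `𝒦` can be
replaced by a feasible stabbing set `S'` of at most the same cost all of whose segments
`[x_1,x_2] × {y}` satisfy `x_1 ∈ X`, `x_2 ∈ X` and `y ∈ Y`. -/
theorem exists_discretized_solution {ι : Type} (A : Finset ι)
    (k : ι → ℕ) (K : (a : ι) → Fin (k a) → Rect)
    (hK : ∀ a ∈ A, IsKShape (K a))
    (X Y : Set ℝ)
    (hX : X = {x : ℝ | ∃ a ∈ A, ∃ i : Fin (k a), x = (K a i).xl ∨ x = (K a i).xr})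
    (hY : Y = {y : ℝ | ∃ a ∈ A, ∃ i : Fin (k a), y = (K a i).yb ∨ y = (K a i).yt})
    (S : Finset Seg) (hSvalid : ∀ s ∈ S, s.valid)
    (hSfeas : ∀ a ∈ A, ∃ s ∈ S, s.stabsShape (K a)) :
    ∃ S' : Finset Seg, (∀ s ∈ S', s.valid) ∧
      (∀ a ∈ A, ∃ s ∈ S', s.stabsShape (K a)) ∧
      segCost S' ≤ segCost S ∧
      ∀ s ∈ S', s.x1 ∈ X ∧ s.x2 ∈ X ∧ s.y ∈ Y := by
  classical
  have key : ∀ s : Seg, (∃ a ∈ A, ∃ i, s.stabsRect (K a i)) →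
      ∃ s' : Seg, s'.valid ∧ s'.len ≤ s.len ∧ (s'.x1 ∈ X ∧ s'.x2 ∈ X ∧ s'.y ∈ Y) ∧
        ∀ a ∈ A, ∀ i, s.stabsRect (K a i) → s'.stabsRect (K a i) := by
    rintro s ⟨a0, ha0, i0, h0⟩
    let T : Finset ((a : ι) × Fin (k a)) :=
      (A.sigma fun a => Finset.univ).filter fun p => s.stabsRect (K p.1 p.2)
    have hT : ∀ p, p ∈ T ↔ p.1 ∈ A ∧ s.stabsRect (K p.1 p.2) := by
      intro p
      simp [T]
    have h0T : (⟨a0, i0⟩ : (a : ι) × Fin (k a)) ∈ T := (hT _).2 ⟨ha0, h0⟩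
    have hne : T.Nonempty := ⟨_, h0T⟩
    obtain ⟨p, hp, hpm⟩ := T.exists_min_image (fun p => (K p.1 p.2).xl) hne
    obtain ⟨q, hq, hqm⟩ := T.exists_max_image (fun p => (K p.1 p.2).xr) hne
    obtain ⟨r, hr, hrm⟩ := T.exists_max_image (fun p => (K p.1 p.2).yb) hne
    rw [hT] at hp hq hr
    obtain ⟨hpA, hp1, hp2, hp3, hp4⟩ := hp
    obtain ⟨hqA, hq1, hq2, hq3, hq4⟩ := hq
    obtain ⟨hrA, hr1, hr2, hr3, hr4⟩ := hr
    refine ⟨⟨(K p.1 p.2).xl, (K q.1 q.2).xr, (K r.1 r.2).yb⟩, ?_, ?_, ⟨?_, ?_, ?_⟩, ?_⟩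
    · have h1 := ((hK a0 ha0).1 i0).1
      have h2 := hpm _ h0T
      have h3 := hqm _ h0T
      simp only [Seg.valid]
      exact (h2.trans h1).trans h3
    · simp only [Seg.len]
      linarith
    · rw [hX]
      exact ⟨p.1, hpA, p.2, Or.inl rfl⟩
    · rw [hX]
      exact ⟨q.1, hqA, q.2, Or.inr rfl⟩
    · rw [hY]
      exact ⟨r.1, hrA, r.2, Or.inl rfl⟩
    · intro a ha i hi
      have hm : (⟨a, i⟩ : (a : ι) × Fin (k a)) ∈ T := (hT _).2 ⟨ha, hi⟩
      exact ⟨hpm _ hm, hqm _ hm, hrm _ hm, hr3.trans hi.2.2.2⟩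
  choose! f hf1 hf2 hf3 hf4 using key
  let S0 := S.filter fun s => ∃ a ∈ A, ∃ i, s.stabsRect (K a i)
  have hS0 : ∀ s, s ∈ S0 ↔ s ∈ S ∧ ∃ a ∈ A, ∃ i, s.stabsRect (K a i) := by
    intro s
    simp [S0]
  refine ⟨S0.image f, ?_, ?_, ?_, ?_⟩
  · intro t ht
    obtain ⟨s, hs, rfl⟩ := Finset.mem_image.1 ht
    exact hf1 s ((hS0 s).1 hs).2
  · intro a ha
    obtain ⟨s, hs, i, hi⟩ := hSfeas a ha
    have hex : ∃ a ∈ A, ∃ i, s.stabsRect (K a i) := ⟨a, ha, i, hi⟩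
    exact ⟨f s, Finset.mem_image_of_mem f ((hS0 s).2 ⟨hs, hex⟩), i, hf4 s hex a ha i hi⟩
  · unfold segCost
    have h1 : ∑ t ∈ S0.image f, t.len ≤ ∑ s ∈ S0, (f s).len := by
      rw [← Finset.sum_fiberwise_of_maps_to
        (fun s hs => Finset.mem_image_of_mem f hs : ∀ s ∈ S0, f s ∈ S0.image f)]
      apply Finset.sum_le_sum
      intro t ht
      obtain ⟨s, hs, rfl⟩ := Finset.mem_image.1 ht
      refine Finset.single_le_sum (f := fun s => (f s).len) (fun u hu => ?_)
        (Finset.mem_filter.2 ⟨hs, rfl⟩)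
      exact sub_nonneg.2 (hf1 u ((hS0 u).1 (Finset.mem_filter.1 hu).1).2)
    have h2 : ∑ s ∈ S0, (f s).len ≤ ∑ s ∈ S0, s.len :=
      Finset.sum_le_sum fun s hs => hf2 s ((hS0 s).1 hs).2
    have h3 : ∑ s ∈ S0, s.len ≤ ∑ s ∈ S, s.len :=
      Finset.sum_le_sum_of_subset_of_nonneg (Finset.filter_subset _ _)
        fun s hs _ => sub_nonneg.2 (hSvalid s hs)
    exact (h1.trans h2).trans h3
  · intro t ht
    obtain ⟨s, hs, rfl⟩ := Finset.mem_image.1 ht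
    exact hf3 s ((hS0 s).1 hs).2
end

section
/- Let w, μ > 0 and n a positive integer, and suppose N := wn/μ² is a positive integer. For z ∈ ℝ and reals x_1 ≤ x_2, let c_z(x_1, x_2) := #{t ∈ ℤ : z + t·(w/μ) ∈ [x_1 − w, x_2 + w]}. Then for all reals x_1 ≤ x_2 with ℓ := x_2 − x_1 ≥ μ/n, one has (1/N) · Σ_{i=0}^{N−1} c_{i·μ/n}(x_1, x_2) · min{ℓ, 2w} ≤ 8μℓ. -/
/-- Let `w, μ > 0`, `n` a positive integer and `N := wn/μ²` a positive
integer. For an offset `z` let `c_z(x_1,x_2)` be the number of grid lines of the vertical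
grid of spacing `w/μ` with offset `z` whose `x`-coordinate lies in `[x_1 − w, x_2 + w]`.
Then for all `x_1 ≤ x_2` with `ℓ := x_2 − x_1 ≥ μ/n`, the average over the `N` offsets
`z ∈ {0, μ/n, …, (N−1)μ/n}` of `c_z(x_1,x_2) · min{ℓ, 2w}` is at most `8μℓ`. -/
theorem average_strip_intersection_cost (w μ : ℝ) (hw : 0 < w) (hμ : 0 < μ)
    (n : ℕ) (hn : 0 < n) (N : ℕ) (hN : 0 < N) (hNdef : (N : ℝ) = w * n / μ ^ 2)
    (x1 x2 : ℝ) (hle : x1 ≤ x2) (hlen : μ / n ≤ x2 - x1) :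
    (1 / (N : ℝ)) * ∑ i ∈ Finset.range N,
        (Nat.card {t : ℤ | x1 - w ≤ (i : ℝ) * (μ / n) + (t : ℝ) * (w / μ) ∧
            (i : ℝ) * (μ / n) + (t : ℝ) * (w / μ) ≤ x2 + w} : ℝ) *
          min (x2 - x1) (2 * w)
      ≤ 8 * μ * (x2 - x1) := by
  have hn' : (0:ℝ) < n := by exact_mod_cast hn
  have hN' : (0:ℝ) < N := by exact_mod_cast hN
  obtain ⟨d, hd⟩ : ∃ d, d = μ / n := ⟨_, rfl⟩
  have hd0 : 0 < d := by rw [hd]; positivity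
  have hsp : w / μ = N * d := by
    rw [hNdef, hd]; field_simp
  rw [← hd] at hlen
  rw [← hd, hsp]
  obtain ⟨l, hl⟩ : ∃ l, l = x2 - x1 := ⟨_, rfl⟩
  rw [← hl] at hlen
  rw [← hl, ← Finset.sum_mul]
  set K : Finset ℤ := Finset.Icc ⌈(x1 - w) / d⌉ ⌊(x2 + w) / d⌋ with hK
  have key : (∑ i ∈ Finset.range N, (Nat.card {t : ℤ | x1 - w ≤ (i : ℝ) * d + (t : ℝ) * (N * d) ∧
            (i : ℝ) * d + (t : ℝ) * (N * d) ≤ x2 + w} : ℝ)) ≤ (K.card : ℝ) := by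
    have h1 : ∀ i ∈ Finset.range N, Nat.card {t : ℤ | x1 - w ≤ (i : ℝ) * d + (t : ℝ) * (N * d) ∧
            (i : ℝ) * d + (t : ℝ) * (N * d) ≤ x2 + w}
          ≤ (K.filter (fun k => (k % (N:ℤ)).toNat = i)).card := by
      intro i hi
      have hiN := Finset.mem_range.mp hi
      rw [← Nat.card_eq_finsetCard]
      have hmem : ∀ t : ℤ, (x1 - w ≤ (i : ℝ) * d + (t : ℝ) * (N * d) ∧
            (i : ℝ) * d + (t : ℝ) * (N * d) ≤ x2 + w) →
          (i + t * N : ℤ) ∈ K.filter (fun k => (k % (N:ℤ)).toNat = i) := by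
        rintro t ⟨ha, hb⟩
        rw [Finset.mem_filter, hK, Finset.mem_Icc, Int.ceil_le, Int.le_floor, div_le_iff₀ hd0,
          le_div_iff₀ hd0]
        push_cast
        refine ⟨⟨by linarith, by linarith⟩, ?_⟩
        rw [Int.add_mul_emod_self_right, Int.emod_eq_of_lt (by omega) (by omega)]
        simp
      refine Nat.card_le_card_of_injective (fun t => ⟨(i + t.1 * N : ℤ), hmem t.1 t.2⟩) ?_
      intro s t hst
      have h : (i + s.1 * N : ℤ) = i + t.1 * N := congrArg Subtype.val hst
      have hNz : (N:ℤ) ≠ 0 := by omega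
      exact Subtype.ext (mul_right_cancel₀ hNz (by linarith))
    have h2 : K.card = ∑ i ∈ Finset.range N, (K.filter (fun k => (k % (N:ℤ)).toNat = i)).card := by
      apply Finset.card_eq_sum_card_fiberwise
      intro k _
      have := Int.emod_lt_of_pos k (show (0:ℤ) < N by exact_mod_cast hN)
      have := Int.emod_nonneg k (show (N:ℤ) ≠ 0 by omega)
      simp only [Finset.coe_range, Set.mem_Iio]
      omega
    rw [h2]
    exact_mod_cast Finset.sum_le_sum h1
  have hKc : (K.card : ℝ) * d ≤ l + 2 * w + d := by
    have h3 : (K.card : ℝ) ≤ (x2 + w) / d - (x1 - w) / d + 1 := by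
      have hf := Int.floor_le ((x2 + w) / d)
      have hc := Int.le_ceil ((x1 - w) / d)
      have hx : (x1 - w) / d ≤ (x2 + w) / d := by gcongr; linarith
      rw [hK, Int.card_Icc]
      rcases le_total 0 (⌊(x2 + w) / d⌋ + 1 - ⌈(x1 - w) / d⌉) with h | h
      · have : (((⌊(x2 + w) / d⌋ + 1 - ⌈(x1 - w) / d⌉).toNat : ℤ) : ℝ)
            = ((⌊(x2 + w) / d⌋ + 1 - ⌈(x1 - w) / d⌉ : ℤ) : ℝ) := by rw [Int.toNat_of_nonneg h]
        push_cast at this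
        linarith
      · rw [Int.toNat_of_nonpos h]
        push_cast
        linarith
    calc (K.card : ℝ) * d ≤ ((x2 + w) / d - (x1 - w) / d + 1) * d := by gcongr
      _ = l + 2 * w + d := by rw [hl]; field_simp; ring
  have hl0 : 0 < l := by linarith
  have hm0 : 0 ≤ min l (2 * w) := by positivity
  have hmin : (2 * l + 2 * w) * min l (2 * w) ≤ 8 * w * l := by
    rcases le_total l (2 * w) with h | h
    · rw [min_eq_left h]; nlinarith
    · rw [min_eq_right h]; nlinarith
  have hw' : w = N * d * μ := by rw [← hsp]; exact (div_mul_cancel₀ w hμ.ne').symm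
  calc _ ≤ 1 / (N:ℝ) * ((K.card : ℝ) * min l (2 * w)) := by gcongr
    _ = ((K.card : ℝ) * d * min l (2 * w)) / (N * d) := by
      clear hw' hNdef hsp hK hd
      generalize (K.card : ℝ) = c
      generalize min l (2 * w) = m
      field_simp
    _ ≤ (8 * w * l) / (N * d) := by
      refine div_le_div_of_nonneg_right (le_trans ?_ hmin) (by positivity)
      refine mul_le_mul_of_nonneg_right ?_ hm0
      linarith
    _ = 8 * μ * l := by
      have : N * d ≠ 0 := by positivity
      rw [div_eq_iff this]
      linear_combination 8 * l * hw'
end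

section
/- Let α ≥ 1 be a real, let ε be a real with 0 < ε < 1/2, and let j, d be integers with j ≤ d − 1 such that M := α·ε^{j−2}/ε^d is a positive integer. If r is chosen uniformly at random from the set {0, ε^d, 2ε^d, …, (M−1)·ε^d}, then for every fixed x_0 ∈ ℝ, the probability that some point of the grid {r + t·α·ε^{j−2} : t ∈ ℤ} lies within distance α·ε^{j−1} of x_0 is at most 3ε. -/
open scoped Classical in
/-- Let `α ≥ 1`, `0 < ε < 1/2`, and integers `j ≤ d − 1` such that
`M := α·ε^(j−2)/ε^d` is a positive integer. If the offset `r` is chosen uniformly at random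
from `{0, ε^d, 2ε^d, …, (M−1)ε^d}`, then for every `x_0 ∈ ℝ` the probability that some point
of the grid `{r + t·α·ε^(j−2) : t ∈ ℤ}` lies within distance `α·ε^(j−1)` of `x_0` is at
most `3ε`. -/
theorem grid_near_point_probability (α ε : ℝ) (hα : 1 ≤ α) (hε0 : 0 < ε) (hε : ε < 1 / 2)
    (j d : ℤ) (hjd : j ≤ d - 1) (M : ℕ) (hM : 0 < M)
    (hMdef : (M : ℝ) = α * ε ^ (j - 2) / ε ^ d) (x0 : ℝ) :
    (((Finset.range M).filter (fun i => ∃ t : ℤ,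
        |(i : ℝ) * ε ^ d + (t : ℝ) * (α * ε ^ (j - 2)) - x0| ≤ α * ε ^ (j - 1))).card : ℝ)
        / (M : ℝ)
      ≤ 3 * ε := by
  have hD : 0 < ε ^ d := zpow_pos hε0 d
  have hMR : (0 : ℝ) < M := by exact_mod_cast hM
  have hS : α * ε ^ (j - 2) = M * ε ^ d := by rw [hMdef]; field_simp
  have hW : α * ε ^ (j - 1) = (ε * M) * ε ^ d := by
    have h1 : ε ^ (j - 1) = ε ^ (j - 2) * ε := by
      rw [← zpow_add_one₀ hε0.ne']; congr 1; ring
    rw [h1]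
    linear_combination ε * hS
  have hw : 1 ≤ ε * M := by
    have h2 : ε ^ d ≤ ε ^ (j - 1) :=
      zpow_le_zpow_right_of_le_one₀ hε0 (by linarith) (by omega)
    have h3 : ε ^ (j - 1) ≤ α * ε ^ (j - 1) :=
      le_mul_of_one_le_left (zpow_pos hε0 _).le hα
    have h4 : 1 * ε ^ d ≤ (ε * M) * ε ^ d := by rw [← hW]; linarith
    exact le_of_mul_le_mul_right h4 hD
  rw [hS, hW]
  set w := ε * (M : ℝ) with hwdef
  obtain ⟨y, hy⟩ : ∃ y : ℝ, x0 = y * ε ^ d := ⟨x0 / ε ^ d, by field_simp⟩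
  rw [div_le_iff₀ hMR]
  have hsub : ((Finset.range M).filter (fun i => ∃ t : ℤ,
        |(i : ℝ) * ε ^ d + (t : ℝ) * (M * ε ^ d) - x0| ≤ w * ε ^ d)) ⊆
      (Finset.Icc ⌈y - w⌉ ⌊y + w⌋).image (fun n : ℤ => (n % (M : ℤ)).toNat) := by
    intro i hi
    rw [Finset.mem_filter] at hi
    obtain ⟨hi0, t, ht⟩ := hi
    obtain ⟨i, hiM, rfl⟩ : ∃ k : ℕ, k < M ∧ (k : ℝ) = i := by
      simp only [Finset.bind_def, Finset.pure_def, Finset.mem_sup, Finset.mem_range,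
        Finset.mem_singleton] at hi0
      obtain ⟨k, hk, h⟩ := hi0
      exact ⟨k, hk, h.symm⟩
    have h5 : (i : ℝ) * ε ^ d + (t : ℝ) * (M * ε ^ d) - x0 = (i + t * M - y) * ε ^ d := by
      rw [hy]; ring
    rw [h5, abs_mul, abs_of_pos hD] at ht
    have h6 := abs_le.mp (le_of_mul_le_mul_right ht hD)
    rw [Finset.mem_image]
    refine ⟨(i : ℤ) + t * M, ?_, ?_⟩
    · rw [Finset.mem_Icc, Int.ceil_le, Int.le_floor]
      push_cast
      constructor <;> linarith [h6.1, h6.2]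
    · simp only [Int.add_mul_emod_self_right]
      rw [Int.emod_eq_of_lt (by omega) (by omega)]
      simp
  have hcard := (Finset.card_le_card hsub).trans Finset.card_image_le
  rw [Int.card_Icc] at hcard
  have h7 : ((⌊y + w⌋ + 1 - ⌈y - w⌉).toNat : ℝ) ≤ 2 * w + 1 := by
    have h8 : ((⌊y + w⌋ + 1 - ⌈y - w⌉).toNat : ℝ)
        = ((max (⌊y + w⌋ + 1 - ⌈y - w⌉) 0 : ℤ) : ℝ) := by
      rw [← Int.toNat_eq_max, Int.cast_natCast]
    rw [h8]
    push_cast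
    apply max_le
    · linarith [Int.floor_le (y + w), Int.le_ceil (y - w)]
    · linarith
  have h9 := (Nat.cast_le (α := ℝ)).mpr hcard
  have h10 : 3 * ε * (M : ℝ) = 3 * w := by rw [hwdef]; ring
  rw [h10]
  refine le_trans h9 ?_
  linarith
end
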